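/- Let G ⊆ O(n+1) be a closed subgroup with -Id ∉ G that contains the subgroup O(n) acting trivially on the last coordinate vector e_{n+1} and naturally on its orthogonal complement. Then G = O(n). -/

import Mathlib

open Matrix in
lemma aux_refl_mem {m : ℕ} (w : Fin m → ℝ) (hw : w ⬝ᵥ w = 1) :
    (1 - (2:ℝ) • vecMulVec w w) ∈ Matrix.orthogonalGroup (Fin m) ℝ := by
  rw [Matrix.mem_orthogonalGroup_iff]
  have h1 : (1 - (2:ℝ) • vecMulVec w w)ᵀ = 1 - (2:ℝ) • vecMulVec w w := by
    ext i j
    simp [vecMulVec_apply, Matrix.one_apply, eq_comm, mul_comm]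
  have h2 : vecMulVec w w * vecMulVec w w = vecMulVec w w := by
    rw [Matrix.vecMulVec_mul_vecMulVec, hw, one_smul]
  rw [h1]
  simp only [sub_mul, mul_sub, one_mul, mul_one, smul_mul_assoc, mul_smul_comm, h2]
  module

open Matrix in
lemma aux_col {m : ℕ} (T : Matrix.orthogonalGroup (Fin m) ℝ) (l : Fin m) :
    (fun i => (T : Matrix (Fin m) (Fin m) ℝ) i l) ⬝ᵥ
      (fun i => (T : Matrix (Fin m) (Fin m) ℝ) i l) = 1 := by
  have h := (Matrix.mem_orthogonalGroup_iff' _ _).1 T.2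
  have h2 := congrFun (congrFun h l) l
  simpa [Matrix.mul_apply, dotProduct] using h2

lemma aux_col_eq {m : ℕ} (T : Matrix.orthogonalGroup (Fin m) ℝ) (l : Fin m)
    (h : (T : Matrix (Fin m) (Fin m) ℝ) l l ^ 2 = 1) (i : Fin m) (hi : i ≠ l) :
    (T : Matrix (Fin m) (Fin m) ℝ) i l = 0 := by
  have h1 := aux_col T l
  rw [dotProduct, ← Finset.add_sum_erase _ _ (Finset.mem_univ l)] at h1
  have h2 : ∑ x ∈ Finset.univ.erase l, (T : Matrix (Fin m) (Fin m) ℝ) x l *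
      (T : Matrix (Fin m) (Fin m) ℝ) x l = 0 := by nlinarith
  rw [Finset.sum_eq_zero_iff_of_nonneg (fun x _ => mul_self_nonneg _)] at h2
  exact mul_self_eq_zero.1 (h2 i (by simp [hi]))

/-- a unit vector orthogonal to `e_l` with prescribed inner product with `v`. -/
lemma aux_exists {n : ℕ} (hn : 2 ≤ n) (l : Fin (n+1)) (v : Fin (n+1) → ℝ) (hv : v ⬝ᵥ v = 1)
    (hc : v l ^ 2 < 1) (r : ℝ) (hr : r ^ 2 ≤ 1 - v l ^ 2) :
    ∃ w : Fin (n+1) → ℝ, w ⬝ᵥ w = 1 ∧ w l = 0 ∧ w ⬝ᵥ v = r := by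
  let f : (Fin (n+1) → ℝ) →ₗ[ℝ] (Fin 2 → ℝ) := Matrix.mulVecLin (Matrix.of ![Pi.single l 1, v])
  have hk : LinearMap.ker f ≠ ⊥ := LinearMap.ker_ne_bot_of_finrank_lt (by simp; omega)
  obtain ⟨x, hx, hx0⟩ := (Submodule.ne_bot_iff _).1 hk
  rw [LinearMap.mem_ker] at hx
  have hx1 : x l = 0 := by simpa [f, Matrix.mulVec] using congrFun hx 0
  have hx2 : v ⬝ᵥ x = 0 := by simpa [f, Matrix.mulVec] using congrFun hx 1
  have hxx : 0 < x ⬝ᵥ x := by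
    have h0 : 0 ≤ x ⬝ᵥ x := Finset.sum_nonneg (fun i _ => mul_self_nonneg _)
    exact lt_of_le_of_ne h0 (fun h => hx0 (dotProduct_self_eq_zero.1 h.symm))
  set c := v l with hcdef
  let u : Fin (n+1) → ℝ := v - c • Pi.single l 1
  have hd : 0 < 1 - c ^ 2 := by linarith
  have huv : u ⬝ᵥ v = 1 - c ^ 2 := by
    simp [u, sub_dotProduct, hv, ← hcdef]; ring
  have hul : u l = 0 := by simp [u, ← hcdef]
  have huu : u ⬝ᵥ u = 1 - c ^ 2 := by
    have : u ⬝ᵥ u = u ⬝ᵥ v - c * u l := by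
      conv_lhs => rw [show u ⬝ᵥ u = u ⬝ᵥ (v - c • Pi.single l 1) from rfl]
      simp [dotProduct_sub]
    rw [this, huv, hul]; ring
  have hux : u ⬝ᵥ x = 0 := by simp [u, sub_dotProduct, hx2, hx1]
  have hxu : x ⬝ᵥ u = 0 := by rw [dotProduct_comm, hux]
  have hxv : x ⬝ᵥ v = 0 := by rw [dotProduct_comm, hx2]
  set b := Real.sqrt ((1 - r ^ 2 / (1 - c ^ 2)) / (x ⬝ᵥ x)) with hb
  have hb2 : b ^ 2 = (1 - r ^ 2 / (1 - c ^ 2)) / (x ⬝ᵥ x) := by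
    apply Real.sq_sqrt
    apply div_nonneg _ hxx.le
    rw [sub_nonneg, div_le_one hd]; exact hr
  refine ⟨(r / (1 - c ^ 2)) • u + b • x, ?_, ?_, ?_⟩
  · simp only [add_dotProduct, dotProduct_add, smul_dotProduct, dotProduct_smul, huu, hux, hxu,
      smul_eq_mul, mul_zero, add_zero, zero_add]
    have : b * (b * (x ⬝ᵥ x)) = 1 - r ^ 2 / (1 - c ^ 2) := by
      rw [← mul_assoc, ← sq, hb2]; field_simp
    rw [this]; field_simp; ring
  · simp [hul, hx1]
  · simp only [add_dotProduct, smul_dotProduct, huv, hxv, smul_eq_mul]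
    field_simp; ring

open Matrix in
lemma aux_step {n : ℕ} (hn : 2 ≤ n)
    (G : Subgroup (Matrix.orthogonalGroup (Fin (n + 1)) ℝ))
    (hsub : ∀ T : Matrix.orthogonalGroup (Fin (n + 1)) ℝ,
      (T : Matrix (Fin (n + 1)) (Fin (n + 1)) ℝ).mulVec (Pi.single (Fin.last n) 1)
        = Pi.single (Fin.last n) 1 → T ∈ G)
    (T : Matrix.orthogonalGroup (Fin (n + 1)) ℝ) (hT : T ∈ G) (r : ℝ)
    (hc : (T : Matrix (Fin (n + 1)) (Fin (n + 1)) ℝ) (Fin.last n) (Fin.last n) ^ 2 < 1)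
    (hr : r ^ 2 ≤ 1 - (T : Matrix (Fin (n + 1)) (Fin (n + 1)) ℝ) (Fin.last n) (Fin.last n) ^ 2) :
    ∃ S ∈ G, (S : Matrix (Fin (n + 1)) (Fin (n + 1)) ℝ) (Fin.last n) (Fin.last n)
      = 1 - 2 * r ^ 2 := by
  obtain ⟨w, hw1, hw2, hw3⟩ := aux_exists hn (Fin.last n)
    (fun i => (T : Matrix (Fin (n+1)) (Fin (n+1)) ℝ) i (Fin.last n)) (aux_col T _) hc r hr
  let H : Matrix.orthogonalGroup (Fin (n + 1)) ℝ := ⟨_, aux_refl_mem w hw1⟩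
  have hH : H ∈ G := by
    apply hsub
    simp only [H, sub_mulVec, one_mulVec, smul_mulVec, vecMulVec_mulVec]
    simp [hw2]
  refine ⟨T⁻¹ * H * T, G.mul_mem (G.mul_mem (G.inv_mem hT) hH) hT, ?_⟩
  have hcol := aux_col T (Fin.last n)
  set v := (fun i => (T : Matrix (Fin (n+1)) (Fin (n+1)) ℝ) i (Fin.last n)) with hv
  have key : ((T⁻¹ * H * T : Matrix.orthogonalGroup (Fin (n + 1)) ℝ) :
      Matrix (Fin (n + 1)) (Fin (n + 1)) ℝ) (Fin.last n) (Fin.last n)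
      = v ⬝ᵥ ((1 - (2:ℝ) • vecMulVec w w) *ᵥ v) := by
    rw [mul_assoc]
    rfl
  rw [key, sub_mulVec, one_mulVec, smul_mulVec, vecMulVec_mulVec, dotProduct_sub, hcol]
  simp [hw3, dotProduct_comm v w]
  ring


/-- Let `G ⊆ O(n+1)` be a closed subgroup with `-Id ∉ G` containing the copy of `O(n)` that
fixes the last basis vector `e_{n+1}` (equivalently, the stabilizer of `e_{n+1}` in `O(n+1)`).
Then `G` equals this copy of `O(n)`. -/
theorem stmt_9 (n : ℕ) (hn : 2 ≤ n)
    (G : Subgroup (Matrix.orthogonalGroup (Fin (n + 1)) ℝ))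
    (hclosed : IsClosed (G : Set (Matrix.orthogonalGroup (Fin (n + 1)) ℝ)))
    (hneg : ∀ T ∈ G, (T : Matrix (Fin (n + 1)) (Fin (n + 1)) ℝ) ≠ -1)
    (hsub : ∀ T : Matrix.orthogonalGroup (Fin (n + 1)) ℝ,
      (T : Matrix (Fin (n + 1)) (Fin (n + 1)) ℝ).mulVec (Pi.single (Fin.last n) 1)
        = Pi.single (Fin.last n) 1 → T ∈ G) :
    ∀ T : Matrix.orthogonalGroup (Fin (n + 1)) ℝ, T ∈ G ↔
      (T : Matrix (Fin (n + 1)) (Fin (n + 1)) ℝ).mulVec (Pi.single (Fin.last n) 1)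
        = Pi.single (Fin.last n) 1 := by
  set l := Fin.last n with hl
  have step := aux_step hn G hsub
  have bad : ∀ T ∈ G, (T : Matrix (Fin (n + 1)) (Fin (n + 1)) ℝ) l l ≠ -1 := by
    intro T hT h
    have hz := aux_col_eq T l (by rw [h]; norm_num)
    have hco : ((-T : Matrix.orthogonalGroup (Fin (n + 1)) ℝ) :
        Matrix (Fin (n + 1)) (Fin (n + 1)) ℝ) = -(T : Matrix (Fin (n + 1)) (Fin (n + 1)) ℝ) := rfl
    have hmem : -T ∈ G := by
      apply hsub
      ext i
      by_cases hi : i = l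
      · subst hi; simp [hco, h]
      · simp [hco, hz i hi, hi]
    apply hneg _ (G.mul_mem (G.inv_mem hmem) hT)
    have : (-T)⁻¹ * T = -1 := by
      rw [inv_mul_eq_iff_eq_mul]; simp
    rw [this]; rfl
  have zero : ∀ T ∈ G, (T : Matrix (Fin (n + 1)) (Fin (n + 1)) ℝ) l l ≠ 0 := by
    intro T hT h
    obtain ⟨S, hS, h'⟩ := step T hT 1 (by rw [h]; norm_num) (by rw [h]; norm_num)
    exact bad S hS (by rw [h']; norm_num)
  have half : ∀ T ∈ G, 1 / 2 < (T : Matrix (Fin (n + 1)) (Fin (n + 1)) ℝ) l l ^ 2 := by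
    intro T hT
    by_contra! h
    have e : √(1 / 2 : ℝ) ^ 2 = 1 / 2 := Real.sq_sqrt (by norm_num)
    obtain ⟨S, hS, h'⟩ := step T hT (√(1 / 2)) (by linarith) (by linarith)
    exact zero S hS (by rw [h', e]; norm_num)
  have dbl : ∀ T ∈ G, (T : Matrix (Fin (n + 1)) (Fin (n + 1)) ℝ) l l ^ 2 < 1 → ∃ S ∈ G,
      (S : Matrix (Fin (n + 1)) (Fin (n + 1)) ℝ) l l =
        2 * (T : Matrix (Fin (n + 1)) (Fin (n + 1)) ℝ) l l ^ 2 - 1 := by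
    intro T hT h
    have e := Real.sq_sqrt (sub_nonneg.2 h.le)
    obtain ⟨S, hS, h'⟩ := step T hT _ h e.le
    exact ⟨S, hS, by rw [h', e]; ring⟩
  have iter : ∀ k : ℕ, ∀ T ∈ G, (T : Matrix (Fin (n + 1)) (Fin (n + 1)) ℝ) l l ^ 2 < 1 →
      1 ≤ 2 ^ k * (1 - (T : Matrix (Fin (n + 1)) (Fin (n + 1)) ℝ) l l ^ 2) → False := by
    intro k
    induction k with
    | zero =>
      intro T hT h1 h2
      have := half T hT
      norm_num at h2
      simp [h2] at this
      norm_num at this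
    | succ k ih =>
      intro T hT h1 h2
      obtain ⟨S, hS, h'⟩ := dbl T hT h1
      have h3 := half T hT
      set q := (T : Matrix (Fin (n + 1)) (Fin (n + 1)) ℝ) l l ^ 2
      apply ih S hS
      · rw [h']; nlinarith
      · rw [h']
        refine h2.trans ?_
        rw [pow_succ, mul_assoc]
        gcongr
        nlinarith
  intro T
  refine ⟨fun hT => ?_, hsub T⟩
  have hle : (T : Matrix (Fin (n + 1)) (Fin (n + 1)) ℝ) l l ^ 2 ≤ 1 := by
    have h1 := aux_col T l
    rw [dotProduct] at h1
    rw [sq, ← h1]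
    exact Finset.single_le_sum (f := fun i => (T : Matrix (Fin (n + 1)) (Fin (n + 1)) ℝ) i l *
      (T : Matrix (Fin (n + 1)) (Fin (n + 1)) ℝ) i l)
      (fun i _ => mul_self_nonneg _) (Finset.mem_univ l)
  rcases hle.lt_or_eq with h | h
  · exfalso
    obtain ⟨k, hk⟩ := pow_unbounded_of_one_lt
      (1 / (1 - (T : Matrix (Fin (n + 1)) (Fin (n + 1)) ℝ) l l ^ 2)) (one_lt_two (α := ℝ))
    exact iter k T hT h ((div_lt_iff₀ (by linarith)).1 hk).le
  · have hz := aux_col_eq T l h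
    have h1 := (sq_eq_sq_iff_eq_or_eq_neg.1 (h.trans (one_pow 2).symm)).resolve_right (bad T hT)
    ext i
    by_cases hi : i = l
    · subst hi; simp [h1]
    · simp [hz i hi, hi]
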